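/- There exists f ∈ Homeo_+[0,1] whose conjugacy class {g⁻¹ ∘ f ∘ g : g ∈ Homeo_+[0,1]} is comeager in Homeo_+[0,1]. -/

import Mathlib

/-!
Comeager many `f` are pairwise conjugate.

A component of the complement of the fixed point set of `f` is called a bump; it is coloured by the
sign of `f x - x`. Call `f` generic (`Generic`) if every interval, with endpoints in a fixed
countable dense set `Q`, that contains a fixed point of `f` has in its interior four points at which
`f x - x` has alternating signs. The bumps of a generic `f` then form a countable dense linear order
without endpoints in which both colours are dense, and the fixed points are nowhere dense.

Genericity is residual (`residual_generic`): the sign pattern is an open condition, and any `f` with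
a fixed point in `[a, b]` is a limit of maps having the pattern in `(a, b)`
(`mem_closure_pattern`).

Two generic maps are conjugate (`Generic.exists_conj`) by a back-and-forth argument carried out on
points. A finite partial conjugacy (`Cons`) is a finite set of pairs `(x, y)` such that
`Fⁿ x ↦ Hⁿ y` is a well defined order isomorphism between the unions of orbits. It extends to any
further non-fixed point `x` (`Cons.exists_fits`): in a bump already met by the domain, the orbits
in play are locally finite around `x`, so the image can be put between its two neighbours; in a new
bump, genericity of `H` supplies a bump of the same sign in the corresponding gap. The limit of
such partial conjugacies has dense domain and range, hence extends to a homeomorphism, which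
conjugates `F` to `H` by continuity.
-/

open unitInterval

noncomputable section

/-- The group of orientation-preserving homeomorphisms of `[0,1]`:
increasing homeomorphisms of the unit interval. -/
def OPH : Type := {f : I ≃ₜ I // Monotone f}

/-- `Homeo₊[0,1]` with the supremum metric `d_sup(f,g) = sup_x |f x - g x|`,
obtained by inducing the metric from `C(I,I)` (whose distance is the sup-distance). -/
noncomputable instance : MetricSpace OPH :=
  MetricSpace.induced (fun f => (⟨(f.1 : I → I), f.1.continuous⟩ : C(I, I)))
    (fun f g h => Subtype.ext (Homeomorph.ext fun x => by
      simpa using ContinuousMap.congr_fun h x))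
    inferInstance

/-- The identity of `Homeo₊[0,1]`. -/
def OPH.id : OPH := ⟨Homeomorph.refl I, fun _ _ h => h⟩

/-- `f ↦ f̃` where `f̃ (x) = 1 - f (1 - x)`. -/
def OPH.tilde (f : OPH) : OPH :=
  ⟨symmHomeomorph.trans (f.1.trans symmHomeomorph), by
    intro x y hxy
    have h1 : σ y ≤ σ x := symm_le_symm.mpr hxy
    have h2 : f.1 (σ y) ≤ f.1 (σ x) := f.2 h1
    exact symm_le_symm.mpr h2⟩


/-! ### Orbits of order automorphisms -/

theorem zpow_add_apply (F : I ≃o I) (m n : ℤ) (x : I) :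
    (F ^ (m + n)) x = (F ^ m) ((F ^ n) x) := by
  rw [zpow_add]; rfl

theorem zpow_succ_apply (F : I ≃o I) (n : ℤ) (x : I) :
    (F ^ (n + 1)) x = F ((F ^ n) x) := by
  rw [add_comm, zpow_add_apply, zpow_one]

theorem zpow_succ_apply' (F : I ≃o I) (n : ℤ) (x : I) :
    (F ^ (n + 1)) x = (F ^ n) (F x) := by
  rw [zpow_add_apply, zpow_one]

theorem zpow_lt_iff (F : I ≃o I) (m n : ℤ) (x y : I) :
    (F ^ m) x < (F ^ n) y ↔ (F ^ (m - n)) x < y := by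
  have h : (F ^ m) x = (F ^ n) ((F ^ (m - n)) x) := by
    rw [← zpow_add_apply]; congr 2; ring
  rw [h]; exact OrderIso.lt_iff_lt _

theorem inv_zpow_apply (F : I ≃o I) (n : ℤ) (x : I) : (F⁻¹ ^ n) x = (F ^ (-n)) x := by
  rw [inv_zpow']

theorem inv_apply_lt_iff (F : I ≃o I) (x : I) : F⁻¹ x < x ↔ x < F x := by
  have h := zpow_lt_iff F (-1) 0 x x
  have h' := zpow_lt_iff F 0 1 x x
  simp only [zero_sub, sub_zero, zpow_zero, zpow_one, zpow_neg] at h h'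
  exact h'.symm

theorem orbit_strictMono {F : I ≃o I} {x : I} (h : x < F x) :
    StrictMono (fun n : ℤ => (F ^ n) x) :=
  strictMono_int_of_lt_succ fun n => by
    rw [zpow_succ_apply']; exact (F ^ n).lt_iff_lt.2 h

theorem orbit_strictAnti {F : I ≃o I} {x : I} (h : F x < x) :
    StrictAnti (fun n : ℤ => (F ^ n) x) :=
  strictAnti_int_of_succ_lt fun n => by
    rw [zpow_succ_apply']; exact (F ^ n).lt_iff_lt.2 h

theorem orbit_of_fixed {F : I ≃o I} {x : I} (h : F x = x) (n : ℤ) : (F ^ n) x = x := by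
  have hs : ∀ n : ℤ, (F ^ (n + 1)) x = (F ^ n) x := fun n => by rw [zpow_succ_apply', h]
  induction n using Int.induction_on with
  | zero => rfl
  | succ k ih => rw [hs, ih]
  | pred k ih => rw [← hs, sub_add_cancel, ih]

theorem apply_zero (F : I ≃o I) : F 0 = 0 := F.map_bot

theorem apply_one (F : I ≃o I) : F 1 = 1 := F.map_top

theorem zpow_zero_apply (F : I ≃o I) (n : ℤ) : (F ^ n) 0 = 0 := orbit_of_fixed (apply_zero F) n

theorem zpow_one_apply (F : I ≃o I) (n : ℤ) : (F ^ n) 1 = 1 := orbit_of_fixed (apply_one F) n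

/-- Whether an orbit moves up or down is decided by its first step. -/
theorem zpow_lt_self_iff_of_sign {F H : I ≃o I} {x y : I}
    (h : (x < F x ∧ y < H y) ∨ (F x < x ∧ H y < y)) (n : ℤ) :
    (F ^ n) x < x ↔ (H ^ n) y < y := by
  rcases h with ⟨h1, h2⟩ | ⟨h1, h2⟩
  · have e1 := (orbit_strictMono h1).lt_iff_lt (a := n) (b := 0)
    have e2 := (orbit_strictMono h2).lt_iff_lt (a := n) (b := 0)
    exact e1.trans e2.symm
  · have e1 := (orbit_strictAnti h1).lt_iff_gt (a := n) (b := 0)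
    have e2 := (orbit_strictAnti h2).lt_iff_gt (a := n) (b := 0)
    exact e1.trans e2.symm

/-! ### Generic automorphisms -/

/-- `F` changes sign at least three times on `(a, b)`, in the order down, up, down, up. -/
def Pattern (F : I ≃o I) (a b : I) : Prop :=
  ∃ x₁ x₂ x₃ x₄ : I, a < x₁ ∧ x₁ < x₂ ∧ x₂ < x₃ ∧ x₃ < x₄ ∧ x₄ < b ∧
    F x₁ < x₁ ∧ x₂ < F x₂ ∧ F x₃ < x₃ ∧ x₄ < F x₄

/-- Whenever an interval with endpoints in `Q` contains a fixed point, its interior contains the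
sign pattern. For dense `Q` this says that the bumps of `F` (the components of the complement of
its fixed point set), ordered along `I` and coloured by sign, form a dense order without endpoints
in which both colours are dense. It also makes the fixed point set nowhere dense. -/
def Generic (Q : Set I) (F : I ≃o I) : Prop :=
  ∀ a ∈ Q, ∀ b ∈ Q, a < b → (∃ p, a ≤ p ∧ p ≤ b ∧ F p = p) → Pattern F a b

/-- The points allowed in a finite partial conjugacy: non-fixed points, and the two endpoints,
which serve as sentinels. -/
def Ok (F : I ≃o I) (x : I) : Prop := x = 0 ∨ x = 1 ∨ F x ≠ x

theorem exists_mem_near_orbit {Q : Set I} (hQ : Dense Q) (h0 : (0 : I) ∈ Q) (h1 : (1 : I) ∈ Q)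
    {F : I ≃o I} {x : I} (hx : Ok F x) :
    ∃ a ∈ Q, ∃ i j : ℤ, (F ^ i) x ≤ a ∧ a ≤ (F ^ j) x := by
  rcases hx with rfl | rfl | hx
  · exact ⟨0, h0, 0, 0, le_rfl, le_rfl⟩
  · exact ⟨1, h1, 0, 0, le_rfl, le_rfl⟩
  · rcases lt_or_gt_of_ne hx with h | h
    · obtain ⟨a, ha, h2, h3⟩ := hQ.exists_between h
      exact ⟨a, ha, 1, 0, by simpa using h2.le, by simpa using h3.le⟩
    · obtain ⟨a, ha, h2, h3⟩ := hQ.exists_between h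
      exact ⟨a, ha, 0, 1, by simpa using h2.le, by simpa using h3.le⟩

/-- The supremum of an orbit is a fixed point. -/
theorem apply_sSup_orbit (F : I ≃o I) (x : I) :
    F (sSup (Set.range fun n : ℤ => (F ^ n) x)) = sSup (Set.range fun n : ℤ => (F ^ n) x) := by
  have hs := isLUB_sSup (Set.range fun n : ℤ => (F ^ n) x)
  have h2 := (OrderIso.isLUB_image' F).2 hs
  have h3 : F '' (Set.range fun n : ℤ => (F ^ n) x) = Set.range fun n : ℤ => (F ^ n) x := by
    ext z
    constructor
    · rintro ⟨_, ⟨n, rfl⟩, rfl⟩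
      exact ⟨n + 1, zpow_succ_apply F n x⟩
    · rintro ⟨n, rfl⟩
      refine ⟨_, ⟨n - 1, rfl⟩, ?_⟩
      simp only
      rw [← zpow_succ_apply, sub_add_cancel]
  rw [h3] at h2
  exact h2.unique hs

/-- Between two orbits lying in different bumps, a generic automorphism has bumps of both
signs. -/
theorem Generic.exists_between_orbits {Q : Set I} (hQ : Dense Q) (h0 : (0 : I) ∈ Q)
    (h1 : (1 : I) ∈ Q) {H : I ≃o I} (hH : Generic Q H) {y z : I} (hy : Ok H y) (hz : Ok H z)
    (hyz : ∀ n m : ℤ, (H ^ n) y < (H ^ m) z) :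
    ∃ u v : I, H u < u ∧ v < H v ∧ (∀ n : ℤ, (H ^ n) y < u ∧ (H ^ n) y < v) ∧
      ∀ n : ℤ, u < (H ^ n) z ∧ v < (H ^ n) z := by
  obtain ⟨a, ha, i, j, hia, haj⟩ := exists_mem_near_orbit hQ h0 h1 hy
  obtain ⟨b, hb, k, l, hkb, hbl⟩ := exists_mem_near_orbit hQ h0 h1 hz
  have hab : a < b := haj.trans_lt ((hyz j k).trans_le hkb)
  have hp : ∃ p, a ≤ p ∧ p ≤ b ∧ H p = p := by
    refine ⟨_, haj.trans (le_sSup (Set.mem_range_self j)), sSup_le ?_, apply_sSup_orbit H y⟩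
    rintro _ ⟨n, rfl⟩
    exact (hyz n k).le.trans hkb
  obtain ⟨x₁, x₂, x₃, x₄, hax, h12, h23, h34, hxb, s1, s2, s3, s4⟩ := hH a ha b hb hab hp
  -- the sign change between `x₁` and `x₂` traps the orbit of `a` below `x₂`
  have low : ∀ n : ℤ, (H ^ n) a < x₂ := by
    intro n
    rcases le_total 0 n with hn | hn
    · refine ((H ^ n).lt_iff_lt.2 hax).trans (lt_of_le_of_lt ?_ h12)
      simpa using (orbit_strictAnti s1).antitone hn
    · refine ((H ^ n).lt_iff_lt.2 (hax.trans h12)).trans_le ?_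
      simpa using (orbit_strictMono s2).monotone hn
  have high : ∀ n : ℤ, x₃ < (H ^ n) b := by
    intro n
    rcases le_total 0 n with hn | hn
    · refine h34.trans (lt_of_le_of_lt ?_ ((H ^ n).lt_iff_lt.2 hxb))
      simpa using (orbit_strictMono s4).monotone hn
    · refine lt_of_le_of_lt ?_ ((H ^ n).lt_iff_lt.2 (h34.trans hxb))
      simpa using (orbit_strictAnti s3).antitone hn
  have low' : ∀ n : ℤ, (H ^ n) y < x₂ := fun n => by
    refine lt_of_le_of_lt ?_ (low (n - i))
    have := (H ^ (n - i)).le_iff_le.2 hia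
    rwa [← zpow_add_apply, sub_add_cancel] at this
  have high' : ∀ n : ℤ, x₃ < (H ^ n) z := fun n => by
    refine lt_of_lt_of_le (high (n - l)) ?_
    have := (H ^ (n - l)).le_iff_le.2 hbl
    rwa [← zpow_add_apply, sub_add_cancel] at this
  exact ⟨x₃, x₂, s3, s2, fun n => ⟨(low' n).trans h23, low' n⟩,
    fun n => ⟨high' n, h23.trans (high' n)⟩⟩

/-- A generic automorphism has no interval of fixed points. -/
theorem Generic.dense_nonfixed {Q : Set I} (hQ : Dense Q) {F : I ≃o I} (hF : Generic Q F) :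
    Dense {x | F x ≠ x} := by
  rw [dense_iff_inter_open]
  intro U hU hne
  obtain ⟨a, b, hab, hsub⟩ := hU.exists_Ioo_subset hne
  obtain ⟨c, hac, hcb⟩ := exists_between hab
  obtain ⟨a', ha', haa', hac'⟩ := hQ.exists_between hac
  obtain ⟨b', hb', hcb', hbb'⟩ := hQ.exists_between hcb
  by_cases hc : F c = c
  · obtain ⟨x₁, x₂, x₃, x₄, h1, h2, h3, h4, h5, s, -⟩ :=
      hF a' ha' b' hb' (hac'.trans hcb') ⟨c, hac'.le, hcb'.le, hc⟩
    exact ⟨x₁, hsub ⟨haa'.trans h1, (h2.trans (h3.trans (h4.trans h5))).trans hbb'⟩, s.ne⟩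
  · exact ⟨c, hsub ⟨hac, hcb⟩, hc⟩

/-! ### Partial conjugacies -/

/-- A set of pairs that is order preserving and compatible with the two actions, in the sense that
`Fⁿ x ↦ Hⁿ y`, for `(x, y) ∈ s` and `n ∈ ℤ`, is a well defined order isomorphism between the
unions of orbits. -/
def Cons (F H : I ≃o I) (s : Set (I × I)) : Prop :=
  ∀ p ∈ s, ∀ q ∈ s, ∀ n : ℤ, (F ^ n) p.1 < q.1 ↔ (H ^ n) p.2 < q.2

theorem Cons.lt_iff {F H : I ≃o I} {s : Set (I × I)} (hs : Cons F H s) {p q : I × I}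
    (hp : p ∈ s) (hq : q ∈ s) (m n : ℤ) :
    (F ^ m) p.1 < (F ^ n) q.1 ↔ (H ^ m) p.2 < (H ^ n) q.2 := by
  rw [zpow_lt_iff, zpow_lt_iff]; exact hs p hp q hq _

theorem Cons.le_iff {F H : I ≃o I} {s : Set (I × I)} (hs : Cons F H s) {p q : I × I}
    (hp : p ∈ s) (hq : q ∈ s) (m n : ℤ) :
    (F ^ m) p.1 ≤ (F ^ n) q.1 ↔ (H ^ m) p.2 ≤ (H ^ n) q.2 := by
  rw [← not_lt, ← not_lt, hs.lt_iff hq hp]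

theorem Cons.eq_iff {F H : I ≃o I} {s : Set (I × I)} (hs : Cons F H s) {p q : I × I}
    (hp : p ∈ s) (hq : q ∈ s) (m n : ℤ) :
    (F ^ m) p.1 = (F ^ n) q.1 ↔ (H ^ m) p.2 = (H ^ n) q.2 := by
  rw [le_antisymm_iff, le_antisymm_iff, hs.le_iff hp hq, hs.le_iff hq hp]

theorem Cons.inv {F H : I ≃o I} {s : Set (I × I)} (hs : Cons F H s) : Cons F⁻¹ H⁻¹ s := by
  intro p hp q hq n
  rw [inv_zpow_apply, inv_zpow_apply]; exact hs p hp q hq _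

theorem Cons.swap {F H : I ≃o I} {s : Set (I × I)} (hs : Cons F H s) :
    Cons H F (Prod.swap '' s) := by
  rintro _ ⟨p, hp, rfl⟩ _ ⟨q, hq, rfl⟩ n
  exact (hs p hp q hq n).symm

/-- `y` realises over the second coordinates of `s` the type of `x` over the first ones. -/
def Fits (F H : I ≃o I) (s : Set (I × I)) (x y : I) : Prop :=
  ((x < F x ∧ y < H y) ∨ (F x < x ∧ H y < y)) ∧
    ∀ p ∈ s, ∀ n : ℤ, ((F ^ n) p.1 < x → (H ^ n) p.2 < y) ∧
      (x < (F ^ n) p.1 → y < (H ^ n) p.2) ∧ ((F ^ n) p.1 = x → (H ^ n) p.2 = y)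

theorem Fits.cons_insert {F H : I ≃o I} {s : Set (I × I)} (hs : Cons F H s) {x y : I}
    (h : Fits F H s x y) : Cons F H (insert (x, y) s) := by
  obtain ⟨hsgn, h⟩ := h
  have key : ∀ p ∈ s, ∀ n : ℤ, ((F ^ n) p.1 < x ↔ (H ^ n) p.2 < y) ∧
      (x < (F ^ n) p.1 ↔ y < (H ^ n) p.2) := by
    intro p hp n
    obtain ⟨h1, h2, h3⟩ := h p hp n
    rcases lt_trichotomy ((F ^ n) p.1) x with c | c | c
    · simp [c, h1 c, c.not_gt, (h1 c).not_gt]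
    · simp [c, h3 c]
    · simp [c, h2 c, c.not_gt, (h2 c).not_gt]
  rintro p (rfl | hp) q (rfl | hq) n
  · exact zpow_lt_self_iff_of_sign hsgn n
  · have := (key q hq (-n)).2
    have e1 := zpow_lt_iff F 0 (-n) x q.1
    have e2 := zpow_lt_iff H 0 (-n) y q.2
    simp only [zpow_zero, zero_sub, neg_neg] at e1 e2
    exact e1.symm.trans (this.trans e2)
  · exact (key p hp n).1
  · exact hs p hp q hq n

theorem Fits.inv {F H : I ≃o I} {s : Set (I × I)} {x y : I} (h : Fits F⁻¹ H⁻¹ s x y) :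
    Fits F H s x y := by
  obtain ⟨hsgn, h⟩ := h
  refine ⟨?_, fun p hp n => ?_⟩
  · have e : ∀ (G : I ≃o I) (w : I), w < G⁻¹ w ↔ G w < w := fun G w => by
      simpa using (inv_apply_lt_iff G⁻¹ w).symm
    rw [e, e, inv_apply_lt_iff, inv_apply_lt_iff] at hsgn
    exact hsgn.symm
  · have := h p hp (-n)
    rwa [inv_zpow_apply, inv_zpow_apply, neg_neg] at this

/-- Extension to a point that copies an existing orbit. -/
theorem Cons.fits_of_mem_orbit {F H : I ≃o I} {s : Set (I × I)} (hs : Cons F H s) {p : I × I}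
    (hp : p ∈ s) (k : ℤ) (hx : F ((F ^ k) p.1) ≠ (F ^ k) p.1) :
    Fits F H s ((F ^ k) p.1) ((H ^ k) p.2) := by
  refine ⟨?_, fun q hq n => ⟨(hs.lt_iff hq hp n k).1, (hs.lt_iff hp hq k n).1,
    (hs.eq_iff hq hp n k).1⟩⟩
  have e1 := hs.lt_iff hp hp (k + 1) k
  have e2 := hs.lt_iff hp hp k (k + 1)
  rw [zpow_succ_apply, zpow_succ_apply] at e1 e2
  rw [← e1, ← e2]
  rcases lt_or_gt_of_ne hx with h | h <;> simp [h]

/-- Extension to a new orbit inside an upward bump that already meets the domain of `s`. A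
half-open fundamental domain of the bump contains only finitely many points of the orbits coming
from `s`, so the point to be added has an immediate predecessor and successor among them. -/
theorem Cons.exists_fits_of_between {F H : I ≃o I} {s : Set (I × I)} (hs : Cons F H s)
    (hfin : s.Finite) {x : I} (hne : ∀ p ∈ s, ∀ n : ℤ, (F ^ n) p.1 ≠ x) {p : I × I} (hp : p ∈ s)
    (hup : p.1 < F p.1) {i j : ℤ} (hi : (F ^ i) p.1 < x) (hj : x < (F ^ j) p.1) :
    ∃ y, Fits F H s x y := by
  have hmono := orbit_strictMono hup
  obtain ⟨k, hk, hkmax⟩ := Int.exists_greatest_of_bdd (P := fun n : ℤ => (F ^ n) p.1 < x)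
    ⟨j, fun z hz => (hmono.lt_iff_lt.1 (lt_trans hz hj)).le⟩ ⟨i, hi⟩
  have hk1 : x < (F ^ (k + 1)) p.1 := by
    refine lt_of_le_of_ne (not_lt.1 fun h => ?_) (hne p hp (k + 1)).symm
    have := hkmax _ h
    omega
  have hT : {r : (I × I) × ℤ | r.1 ∈ s ∧ (F ^ k) p.1 ≤ (F ^ r.2) r.1.1 ∧
      (F ^ r.2) r.1.1 < (F ^ (k + 1)) p.1}.Finite := by
    refine Set.Finite.of_injOn (f := Prod.fst) (t := s) (fun r hr => hr.1) ?_ hfin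
    have aux : ∀ (q : I × I) (n m : ℤ), (F ^ k) p.1 ≤ (F ^ n) q.1 →
        (F ^ n) q.1 < (F ^ (k + 1)) p.1 → (F ^ m) q.1 < (F ^ (k + 1)) p.1 → ¬ n < m := by
      intro q n m h1 h2 h3 hnm
      have h4 : (F ^ (k + 1)) p.1 ≤ (F ^ (n + 1)) q.1 := by
        rw [zpow_succ_apply, zpow_succ_apply]; exact F.le_iff_le.2 h1
      have hq : q.1 < F q.1 := by
        have := h2.trans_le h4
        rw [zpow_succ_apply'] at this
        exact (F ^ n).lt_iff_lt.1 this
      exact absurd h3 (not_lt.2 (h4.trans ((orbit_strictMono hq).monotone (by omega))))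
    rintro ⟨q, n⟩ ⟨-, h1, h2⟩ ⟨q', m⟩ ⟨-, h3, h4⟩ (rfl : q = q')
    have a1 := aux q n m h1 h2 h4
    have a2 := aux q m n h3 h4 h2
    have : n = m := by omega
    rw [this]
  obtain ⟨⟨q₁, n₁⟩, ⟨hq₁, hx₁⟩, hmax⟩ := Set.exists_max_image
    {r : (I × I) × ℤ | r.1 ∈ s ∧ (F ^ k) p.1 ≤ (F ^ r.2) r.1.1 ∧ (F ^ r.2) r.1.1 < x}
    (fun r => (F ^ r.2) r.1.1) (hT.subset fun r hr => ⟨hr.1, hr.2.1, hr.2.2.trans hk1⟩)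
    ⟨(p, k), hp, le_rfl, hk⟩
  obtain ⟨⟨q₂, n₂⟩, hr₂, hmin⟩ := Set.exists_min_image
    (insert (p, k + 1) {r : (I × I) × ℤ | r.1 ∈ s ∧ x < (F ^ r.2) r.1.1 ∧
      (F ^ r.2) r.1.1 < (F ^ (k + 1)) p.1})
    (fun r => (F ^ r.2) r.1.1)
    ((hT.subset fun r hr => ⟨hr.1, (hk.trans hr.2.1).le, hr.2.2⟩).insert _)
    ⟨(p, k + 1), Set.mem_insert _ _⟩
  have hx₂ : q₂ ∈ s ∧ x < (F ^ n₂) q₂.1 := by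
    rcases hr₂ with h | h
    · obtain ⟨rfl, rfl⟩ := Prod.mk.inj h
      exact ⟨hp, hk1⟩
    · exact ⟨h.1, h.2.1⟩
  obtain ⟨y, hy1, hy2⟩ := exists_between ((hs.lt_iff hq₁ hx₂.1 n₁ n₂).1 (hx₁.2.trans hx₂.2))
  have low : ∀ q ∈ s, ∀ n : ℤ, (F ^ n) q.1 < x → (H ^ n) q.2 < y := by
    intro q hq n h
    refine lt_of_le_of_lt ((hs.le_iff hq hq₁ n n₁).1 ?_) hy1
    rcases le_total ((F ^ k) p.1) ((F ^ n) q.1) with hc | hc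
    · exact hmax (q, n) ⟨hq, hc, h⟩
    · exact hc.trans hx₁.1
  have high : ∀ q ∈ s, ∀ n : ℤ, x < (F ^ n) q.1 → y < (H ^ n) q.2 := by
    intro q hq n h
    refine lt_of_lt_of_le hy2 ((hs.le_iff hx₂.1 hq n₂ n).1 ?_)
    rcases lt_or_ge ((F ^ n) q.1) ((F ^ (k + 1)) p.1) with hc | hc
    · exact hmin (q, n) (Or.inr ⟨hq, h, hc⟩)
    · exact (hmin (p, k + 1) (Or.inl rfl)).trans hc
  refine ⟨y, Or.inl ⟨?_, ?_⟩, fun q hq n =>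
    ⟨low q hq n, high q hq n, fun h => absurd h (hne q hq n)⟩⟩
  · refine hk1.trans ?_
    rw [zpow_succ_apply]; exact F.lt_iff_lt.2 hk
  · refine (high p hp _ hk1).trans ?_
    rw [zpow_succ_apply]; exact H.lt_iff_lt.2 (low p hp _ hk)

/-- Extension to a new orbit in a bump that does not meet the domain of `s`: the corresponding gap
in the range of `s` contains a bump of the same sign. -/
theorem Cons.exists_fits_of_new_bump {Q : Set I} (hQ : Dense Q) (h0 : (0 : I) ∈ Q)
    (h1 : (1 : I) ∈ Q) {F H : I ≃o I} (hH : Generic Q H) {s : Set (I × I)} (hs : Cons F H s)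
    (hfin : s.Finite) (hok : ∀ p ∈ s, Ok H p.2) (hs0 : ((0, 0) : I × I) ∈ s)
    (hs1 : ((1, 1) : I × I) ∈ s) {x : I} (hx : F x ≠ x)
    (hside : ∀ p ∈ s, (∀ n : ℤ, (F ^ n) p.1 < x) ∨ ∀ n : ℤ, x < (F ^ n) p.1) :
    ∃ y, Fits F H s x y := by
  have hx0 : 0 < x := unitInterval.pos_iff_ne_zero.2 fun h => hx (by rw [h, apply_zero])
  have hx1 : x < 1 := unitInterval.lt_one_iff_ne_one.2 fun h => hx (by rw [h, apply_one])
  obtain ⟨p, ⟨hp, hpx⟩, hmax⟩ := Set.exists_max_image {p | p ∈ s ∧ p.1 < x} Prod.fst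
    (hfin.subset fun p hp => hp.1) ⟨_, hs0, hx0⟩
  obtain ⟨q, ⟨hq, hqx⟩, hmin⟩ := Set.exists_min_image {p | p ∈ s ∧ x < p.1} Prod.fst
    (hfin.subset fun p hp => hp.1) ⟨_, hs1, hx1⟩
  have below : ∀ r ∈ s, ∀ n : ℤ, (F ^ n) r.1 < x → ∀ m : ℤ, (F ^ m) r.1 < x := fun r hr n hn =>
    (hside r hr).resolve_right fun h => lt_asymm hn (h n)
  have above : ∀ r ∈ s, ∀ n : ℤ, x < (F ^ n) r.1 → ∀ m : ℤ, x < (F ^ m) r.1 := fun r hr n hn =>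
    (hside r hr).resolve_left fun h => lt_asymm hn (h n)
  obtain ⟨u, v, hu, hv, hl, hr⟩ := hH.exists_between_orbits hQ h0 h1 (hok p hp) (hok q hq)
    fun n m => (hs.lt_iff hp hq n m).1 ((below p hp 0 hpx n).trans (above q hq 0 hqx m))
  have fits : ∀ y, ((x < F x ∧ y < H y) ∨ (F x < x ∧ H y < y)) → (∀ n : ℤ, (H ^ n) p.2 < y) →
      (∀ n : ℤ, y < (H ^ n) q.2) → Fits F H s x y := by
    refine fun y hsgn hpy hqy => ⟨hsgn, fun r hr n => ⟨fun h => ?_, fun h => ?_, fun h => ?_⟩⟩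
    · refine lt_of_le_of_lt ((hs.le_iff hr hp n n).1 ((F ^ n).le_iff_le.2 ?_)) (hpy n)
      exact hmax r ⟨hr, below r hr n h 0⟩
    · refine lt_of_lt_of_le (hqy n) ((hs.le_iff hq hr n n).1 ((F ^ n).le_iff_le.2 ?_))
      exact hmin r ⟨hr, above r hr n h 0⟩
    · rcases hside r hr with h' | h'
      · exact absurd h (h' n).ne
      · exact absurd h (h' n).ne'
  rcases lt_or_gt_of_ne hx with h | h
  · exact ⟨u, fits u (Or.inr ⟨h, hu⟩) (fun n => (hl n).1) fun n => (hr n).1⟩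
  · exact ⟨v, fits v (Or.inl ⟨h, hv⟩) (fun n => (hl n).2) fun n => (hr n).2⟩

/-- The one-point extension property of finite partial conjugacies. -/
theorem Cons.exists_fits {Q : Set I} (hQ : Dense Q) (h0 : (0 : I) ∈ Q)
    (h1 : (1 : I) ∈ Q) {F H : I ≃o I} (hH : Generic Q H) {s : Set (I × I)} (hs : Cons F H s)
    (hfin : s.Finite) (hok : ∀ p ∈ s, Ok H p.2) (hs0 : ((0, 0) : I × I) ∈ s)
    (hs1 : ((1, 1) : I × I) ∈ s) {x : I} (hx : F x ≠ x) :
    ∃ y, Fits F H s x y := by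
  by_cases hne : ∀ p ∈ s, ∀ n : ℤ, (F ^ n) p.1 ≠ x
  · by_cases hside : ∀ p ∈ s, (∀ n : ℤ, (F ^ n) p.1 < x) ∨ ∀ n : ℤ, x < (F ^ n) p.1
    · exact hs.exists_fits_of_new_bump hQ h0 h1 hH hfin hok hs0 hs1 hx hside
    · push Not at hside
      obtain ⟨p, hp, ⟨j, hj⟩, ⟨i, hi⟩⟩ := hside
      replace hj := lt_of_le_of_ne hj (hne p hp j).symm
      replace hi := lt_of_le_of_ne hi (hne p hp i)
      rcases lt_trichotomy (F p.1) p.1 with h | h | h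
      · -- a downward bump of `F` is an upward bump of `F⁻¹`
        obtain ⟨y, hy⟩ := hs.inv.exists_fits_of_between hfin
          (fun q hq n => by rw [inv_zpow_apply]; exact hne q hq _) hp
          (by simpa using (inv_apply_lt_iff F⁻¹ p.1).1 (by simpa using h))
          (i := -i) (j := -j) (by rwa [inv_zpow_apply, neg_neg])
          (by rwa [inv_zpow_apply, neg_neg])
        exact ⟨y, hy.inv⟩
      · rw [orbit_of_fixed h] at hi hj
        exact absurd hi (lt_asymm hj)
      · exact hs.exists_fits_of_between hfin hne hp h hi hj
  · push Not at hne
    obtain ⟨p, hp, n, rfl⟩ := hne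
    exact ⟨_, hs.fits_of_mem_orbit hp n hx⟩

theorem Fits.ok {F H : I ≃o I} {s : Set (I × I)} {x y : I} (h : Fits F H s x y) :
    Ok F x ∧ Ok H y := by
  rcases h.1 with ⟨h1, h2⟩ | ⟨h1, h2⟩
  · exact ⟨Or.inr (Or.inr h1.ne'), Or.inr (Or.inr h2.ne')⟩
  · exact ⟨Or.inr (Or.inr h1.ne), Or.inr (Or.inr h2.ne)⟩

/-- Finite partial conjugacies from `F` to `H`, ordered by inclusion. -/
abbrev PartialConj (F H : I ≃o I) : Type :=
  {s : Set (I × I) // s.Finite ∧ Cons F H s ∧ (∀ p ∈ s, Ok F p.1 ∧ Ok H p.2) ∧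
    ((0, 0) : I × I) ∈ s ∧ ((1, 1) : I × I) ∈ s}

/-- The partial conjugacy defined at the two endpoints only. -/
def PartialConj.endpoints (F H : I ≃o I) : PartialConj F H :=
  ⟨{(0, 0), (1, 1)}, by simp, by
    rintro p (rfl | rfl) q (rfl | rfl) n <;> simp [zpow_zero_apply, zpow_one_apply], by
    rintro p (rfl | rfl) <;> simp [Ok], by simp, by simp⟩

theorem PartialConj.exists_forth {Q : Set I} (hQ : Dense Q) (h0 : (0 : I) ∈ Q)
    (h1 : (1 : I) ∈ Q) {F H : I ≃o I} (hH : Generic Q H) (s : PartialConj F H) {x : I}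
    (hx : F x ≠ x) : ∃ t : PartialConj F H, s ≤ t ∧ ∃ y, (x, y) ∈ t.1 := by
  obtain ⟨s, hfin, hs, hok, hs0, hs1⟩ := s
  obtain ⟨y, hy⟩ := hs.exists_fits hQ h0 h1 hH hfin (fun p hp => (hok p hp).2) hs0 hs1 hx
  refine ⟨⟨insert (x, y) s, hfin.insert _, hy.cons_insert hs, ?_, Or.inr hs0, Or.inr hs1⟩,
    Set.subset_insert _ _, y, Set.mem_insert _ _⟩
  rintro p (rfl | hp)
  exacts [hy.ok, hok p hp]

/-- The inverse of a partial conjugacy. -/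
def PartialConj.swap {F H : I ≃o I} (s : PartialConj F H) : PartialConj H F :=
  ⟨Prod.swap '' s.1, s.2.1.image _, s.2.2.1.swap, by
    rintro _ ⟨p, hp, rfl⟩
    exact (s.2.2.2.1 p hp).symm, ⟨_, s.2.2.2.2.1, rfl⟩, ⟨_, s.2.2.2.2.2, rfl⟩⟩

theorem PartialConj.exists_back {Q : Set I} (hQ : Dense Q) (h0 : (0 : I) ∈ Q)
    (h1 : (1 : I) ∈ Q) {F H : I ≃o I} (hF : Generic Q F) (s : PartialConj F H) {y : I}
    (hy : H y ≠ y) : ∃ t : PartialConj F H, s ≤ t ∧ ∃ x, (x, y) ∈ t.1 := by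
  obtain ⟨t, hst, x, hx⟩ := s.swap.exists_forth hQ h0 h1 hF hy
  exact ⟨t.swap, fun p hp => ⟨p.swap, hst ⟨p, hp, rfl⟩, p.swap_swap⟩, x, ⟨_, hx, rfl⟩⟩

/-- Back and forth: between generic `F` and `H` there is a partial conjugacy with dense domain and
dense range. -/
theorem exists_dense_cons {Q : Set I} (hQc : Q.Countable) (hQ : Dense Q) (h0 : (0 : I) ∈ Q)
    (h1 : (1 : I) ∈ Q) {F H : I ≃o I} (hF : Generic Q F) (hH : Generic Q H) :
    ∃ R : Set (I × I), Cons F H R ∧ Dense (Prod.fst '' R) ∧ Dense (Prod.snd '' R) := by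
  have hopen : ∀ G : I ≃o I, IsOpen {x | G x ≠ x} := fun G =>
    isOpen_ne_fun G.continuous continuous_id
  let _ : Encodable Q := hQc.toEncodable
  let 𝒟 : Q ⊕ Q → Order.Cofinal (PartialConj F H) := Sum.elim
    (fun x => ⟨{s | F x ≠ x → ∃ y, ((x : I), y) ∈ s.1}, fun s => by
      by_cases hx : F x = x
      · exact ⟨s, fun h => absurd hx h, le_rfl⟩
      · obtain ⟨t, ht, h⟩ := s.exists_forth hQ h0 h1 hH hx
        exact ⟨t, fun _ => h, ht⟩⟩)
    (fun y => ⟨{s | H y ≠ y → ∃ x, (x, (y : I)) ∈ s.1}, fun s => by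
      by_cases hy : H y = y
      · exact ⟨s, fun h => absurd hy h, le_rfl⟩
      · obtain ⟨t, ht, h⟩ := s.exists_back hQ h0 h1 hF hy
        exact ⟨t, fun _ => h, ht⟩⟩)
  let J := Order.idealOfCofinals (PartialConj.endpoints F H) 𝒟
  refine ⟨{p | ∃ s ∈ J, p ∈ s.1}, ?_, ?_, ?_⟩
  · rintro p ⟨s, hs, hp⟩ q ⟨t, ht, hq⟩ n
    obtain ⟨r, -, hsr, htr⟩ := J.directed s hs t ht
    exact r.2.2.1 p (hsr hp) q (htr hq) n
  · refine (hQ.inter_of_isOpen_right (hF.dense_nonfixed hQ) (hopen F)).mono ?_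
    rintro x ⟨hx, hx'⟩
    obtain ⟨s, hs, hsJ⟩ :=
      Order.cofinal_meets_idealOfCofinals (PartialConj.endpoints F H) 𝒟 (Sum.inl ⟨x, hx⟩)
    obtain ⟨y, hy⟩ := hs hx'
    exact ⟨(x, y), ⟨s, hsJ, hy⟩, rfl⟩
  · refine (hQ.inter_of_isOpen_right (hH.dense_nonfixed hQ) (hopen H)).mono ?_
    rintro y ⟨hy, hy'⟩
    obtain ⟨s, hs, hsJ⟩ :=
      Order.cofinal_meets_idealOfCofinals (PartialConj.endpoints F H) 𝒟 (Sum.inr ⟨y, hy⟩)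
    obtain ⟨x, hx⟩ := hs hy'
    exact ⟨(x, y), ⟨s, hsJ, hx⟩, rfl⟩

/-- An order preserving relation with dense domain and dense range extends to an automorphism. -/
theorem exists_orderIso_of_dense {R : Set (I × I)}
    (hR : ∀ p ∈ R, ∀ q ∈ R, p.1 < q.1 ↔ p.2 < q.2) (hd : Dense (Prod.fst '' R))
    (hr : Dense (Prod.snd '' R)) : ∃ Φ : I ≃o I, ∀ p ∈ R, Φ p.1 = p.2 := by
  let φ : I → I := fun t => sSup {y | ∃ x, x < t ∧ (x, y) ∈ R}
  have hbd : ∀ {u v : I}, u < v → ∃ p ∈ R, u < p.1 ∧ p.1 < v := fun h => by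
    obtain ⟨_, ⟨p, hp, rfl⟩, h1, h2⟩ := hd.exists_between h
    exact ⟨p, hp, h1, h2⟩
  have hbr : ∀ {u v : I}, u < v → ∃ p ∈ R, u < p.2 ∧ p.2 < v := fun h => by
    obtain ⟨_, ⟨p, hp, rfl⟩, h1, h2⟩ := hr.exists_between h
    exact ⟨p, hp, h1, h2⟩
  have hle : ∀ p ∈ R, ∀ t, p.1 < t → p.2 ≤ φ t := fun p hp t h => le_sSup ⟨p.1, h, hp⟩
  have hge : ∀ p ∈ R, ∀ t, t ≤ p.1 → φ t ≤ p.2 := fun p hp t h => by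
    refine sSup_le ?_
    rintro y ⟨x, hx, hxy⟩
    exact ((hR _ hxy p hp).1 (hx.trans_le h)).le
  have hφR : ∀ p ∈ R, φ p.1 = p.2 := fun p hp => by
    refine le_antisymm (hge p hp _ le_rfl) (not_lt.1 fun h => ?_)
    obtain ⟨q, hq, h1, h2⟩ := hbr h
    exact absurd (hle q hq _ ((hR q hq p hp).2 h2)) (not_le.2 h1)
  have hmono : StrictMono φ := fun t t' h => by
    obtain ⟨p, hp, h1, h2⟩ := hbd h
    obtain ⟨q, hq, h3, h4⟩ := hbd h2
    exact (hge p hp t h1.le).trans_lt (((hR p hp q hq).1 h3).trans_le (hle q hq t' h4))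
  have hsurj : Function.Surjective φ := fun y => by
    refine ⟨sSup {x | ∃ z, z < y ∧ (x, z) ∈ R}, ?_⟩
    rcases lt_trichotomy (φ (sSup {x | ∃ z, z < y ∧ (x, z) ∈ R})) y with h | h | h
    · obtain ⟨p, hp, h1, h2⟩ := hbr h
      rw [← hφR p hp, hmono.lt_iff_lt] at h1
      exact (not_le.2 h1 (le_sSup ⟨p.2, h2, hp⟩)).elim
    · exact h
    · obtain ⟨p, hp, h1, h2⟩ := hbr h
      rw [← hφR p hp, hmono.lt_iff_lt] at h2
      refine absurd (sSup_le ?_) (not_le.2 h2)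
      rintro x ⟨z, hz, hxz⟩
      exact ((hR _ hxz p hp).2 (hz.trans h1)).le
  exact ⟨hmono.orderIsoOfSurjective φ hsurj, hφR⟩

/-- Any two generic automorphisms are conjugate. -/
theorem Generic.exists_conj {Q : Set I} (hQc : Q.Countable) (hQ : Dense Q) (h0 : (0 : I) ∈ Q)
    (h1 : (1 : I) ∈ Q) {F H : I ≃o I} (hF : Generic Q F) (hH : Generic Q H) :
    ∃ Φ : I ≃o I, ∀ x, Φ (F x) = H (Φ x) := by
  obtain ⟨R, hR, hd, hr⟩ := exists_dense_cons hQc hQ h0 h1 hF hH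
  obtain ⟨Φ, hΦ⟩ := exists_orderIso_of_dense (fun p hp q hq => hR p hp q hq 0) hd hr
  refine ⟨Φ, fun x => congrFun (Continuous.ext_on hd (Φ.continuous.comp F.continuous)
    (H.continuous.comp Φ.continuous) ?_) x⟩
  rintro _ ⟨p, hp, rfl⟩
  -- both sides have the same position relative to the dense range of `R`
  have key : ∀ q ∈ R, Φ (F p.1) < q.2 ↔ H (Φ p.1) < q.2 := fun q hq => by
    have := hR p hp q hq 1
    rw [zpow_one, zpow_one] at this
    rw [hΦ p hp, ← this, ← hΦ q hq, Φ.lt_iff_lt]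
  simp only [Function.comp]
  rcases lt_trichotomy (Φ (F p.1)) (H (Φ p.1)) with h | h | h
  · obtain ⟨_, ⟨q, hq, rfl⟩, h1, h2⟩ := hr.exists_between h
    exact absurd ((key q hq).1 h1) h2.not_gt
  · exact h
  · obtain ⟨_, ⟨q, hq, rfl⟩, h1, h2⟩ := hr.exists_between h
    exact absurd ((key q hq).2 h1) h2.not_gt

/-! ### Genericity is residual -/

/-- A point of an interval can be pushed up to any other by an automorphism supported there: take
the maximum of the identity and of the piecewise linear function with graph through
`(c, c)`, `(z, y)` and `(d, d)`. -/
theorem exists_push_up {c d z y : I} (hcz : c < z) (hzy : z ≤ y) (hyd : y < d) :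
    ∃ k : I ≃o I, k z = y ∧ ∀ w, w ≤ c ∨ d ≤ w → k w = w := by
  have hzd := hzy.trans_lt hyd
  have hcy := hcz.trans_le hzy
  rw [← Subtype.coe_lt_coe] at hcz hyd hzd hcy
  rw [← Subtype.coe_le_coe] at hzy
  set α : ℝ := ((y : ℝ) - c) / (z - c) with hα
  set β : ℝ := ((d : ℝ) - y) / (d - z) with hβ
  have hα1 : 1 ≤ α := by rw [hα, one_le_div (by linarith)]; linarith
  have hβ0 : 0 < β := div_pos (by linarith) (by linarith)
  have hβ1 : β ≤ 1 := by rw [hβ, div_le_one (by linarith)]; linarith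
  have hαz : α * (z - c) = y - c := div_mul_cancel₀ _ (by linarith)
  have hβz : β * (d - z) = d - y := div_mul_cancel₀ _ (by linarith)
  let g : ℝ → ℝ := fun w => max w (min (c + α * (w - c)) (d - β * (d - w)))
  have hgout : ∀ w : ℝ, w ≤ c ∨ d ≤ w → g w = w := by
    rintro w (h | h)
    · exact max_eq_left ((min_le_left _ _).trans (by nlinarith))
    · exact max_eq_left ((min_le_right _ _).trans (by nlinarith))
  have hmem : ∀ w : I, g w ∈ I := fun w => by
    refine ⟨w.2.1.trans (le_max_left _ _), max_le w.2.2 ((min_le_right _ _).trans ?_)⟩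
    have := d.2.2
    have := w.2.2
    rcases le_total (w : ℝ) d with h | h <;> nlinarith
  have hmono : StrictMono fun w : I => (⟨g w, hmem w⟩ : I) := fun v w h => by
    have h' : (v : ℝ) < w := h
    exact max_lt_max h' (min_lt_min (by nlinarith) (by nlinarith))
  have hcont : Continuous fun w : I => (⟨g w, hmem w⟩ : I) := by
    refine Continuous.subtype_mk ?_ _
    fun_prop
  have hsurj : Function.Surjective fun w : I => (⟨g w, hmem w⟩ : I) := fun w => by
    refine intermediate_value_univ 0 1 hcont ⟨?_, ?_⟩
    · exact (Subtype.coe_le_coe.1 ((hgout _ (Or.inl c.2.1)).le.trans w.2.1))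
    · exact (Subtype.coe_le_coe.1 (w.2.2.trans (hgout _ (Or.inr d.2.2)).ge))
  refine ⟨hmono.orderIsoOfSurjective _ hsurj, Subtype.ext ?_, fun w hw => Subtype.ext (hgout w hw)⟩
  change max (z : ℝ) (min (c + α * (z - c)) (d - β * (d - z))) = y
  rw [hαz, hβz, add_sub_cancel, sub_sub_cancel, min_self, max_eq_right hzy]

theorem exists_push {c d z y : I} (hcz : c < z) (hzd : z < d) (hcy : c < y) (hyd : y < d) :
    ∃ k : I ≃o I, k z = y ∧ ∀ w, w ≤ c ∨ d ≤ w → k w = w := by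
  rcases le_total z y with h | h
  · exact exists_push_up hcz h hyd
  · obtain ⟨k, hk, hout⟩ := exists_push_up hcy h hzd
    exact ⟨k.symm, by rw [← hk, k.symm_apply_apply],
      fun w hw => by rw [k.symm_apply_eq, hout w hw]⟩

/-- An automorphism supported in `[c, d]` can move any finite increasing list of points of `(c, d)`
to any other of the same length. -/
theorem exists_push_list {d : I} (n : ℕ) : ∀ (l : List (I × I)) (c : I), l.length = n →
    (∀ p ∈ l, c < p.1 ∧ p.1 < d ∧ c < p.2 ∧ p.2 < d) →
    l.Pairwise (fun p q => p.1 < q.1 ∧ p.2 < q.2) →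
    ∃ k : I ≃o I, (∀ p ∈ l, k p.1 = p.2) ∧ ∀ w, w ≤ c ∨ d ≤ w → k w = w := by
  induction n with
  | zero =>
    intro l c hl _ _
    obtain rfl := List.length_eq_zero_iff.1 hl
    exact ⟨OrderIso.refl I, by simp, fun _ _ => rfl⟩
  | succ n ih =>
    rintro (_ | ⟨p, l⟩) c hl hmem hpair
    · simp at hl
    obtain ⟨hp, hl'⟩ := List.forall_mem_cons.1 hmem
    obtain ⟨hpl, hpair'⟩ := List.pairwise_cons.1 hpair
    obtain ⟨k₁, hk₁, hout₁⟩ := exists_push hp.1 hp.2.1 hp.2.2.1 hp.2.2.2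
    obtain ⟨k₂, hk₂, hout₂⟩ := ih (l.map fun q => (k₁ q.1, q.2)) p.2 (by simpa using hl)
      (by
        intro q' hq'
        obtain ⟨q, hq, rfl⟩ := List.mem_map.1 hq'
        refine ⟨?_, ?_, (hpl q hq).2, (hl' q hq).2.2.2⟩
        · exact hk₁ ▸ k₁.lt_iff_lt.2 (hpl q hq).1
        · have := k₁.lt_iff_lt.2 (hl' q hq).2.1
          rwa [hout₁ d (Or.inr le_rfl)] at this)
      (List.pairwise_map.2 (hpair'.imp fun h => ⟨k₁.lt_iff_lt.2 h.1, h.2⟩))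
    refine ⟨k₁.trans k₂, List.forall_mem_cons.2 ⟨?_, fun q hq => ?_⟩, fun w hw => ?_⟩
    · rw [OrderIso.trans_apply, hk₁, hout₂ _ (Or.inl le_rfl)]
    · exact hk₂ _ (List.mem_map.2 ⟨q, hq, rfl⟩)
    · rw [OrderIso.trans_apply, hout₁ w hw, hout₂ w (hw.imp_left fun h => h.trans hp.2.2.1.le)]

/-- The order automorphism underlying an element of `Homeo₊[0,1]`. -/
def OPH.toIso (f : OPH) : I ≃o I :=
  StrictMono.orderIsoOfSurjective f.1 (f.2.strictMono_of_injective f.1.injective) f.1.surjective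

theorem OPH.toIso_apply (f : OPH) (x : I) : f.toIso x = f.1 x := rfl

/-- The element of `Homeo₊[0,1]` given by an order automorphism. -/
def OPH.ofIso (F : I ≃o I) : OPH := ⟨F.toHomeomorph, F.monotone⟩

theorem OPH.continuous_eval (x : I) : Continuous fun f : OPH => f.1 x := by
  have h : Continuous fun f : OPH => (⟨(f.1 : I → I), f.1.continuous⟩ : C(I, I)) :=
    continuous_induced_dom
  exact (continuous_eval_const (F := C(I, I)) x).comp h

theorem OPH.dist_le {f g : OPH} {C : ℝ} (hC : 0 ≤ C) (h : ∀ x, dist (f.1 x) (g.1 x) ≤ C) :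
    dist f g ≤ C :=
  (ContinuousMap.dist_le hC).2 h

theorem isOpen_pattern (a b : I) : IsOpen {f : OPH | Pattern f.toIso a b} := by
  simp only [Pattern, OPH.toIso_apply, Set.ofPred_exists]
  refine isOpen_iUnion fun x₁ => isOpen_iUnion fun x₂ => isOpen_iUnion fun x₃ =>
    isOpen_iUnion fun x₄ => ?_
  have hc := OPH.continuous_eval
  refine isOpen_const.and <| isOpen_const.and <| isOpen_const.and <| isOpen_const.and <|
    isOpen_const.and <| ?_
  exact (isOpen_lt (hc _) continuous_const).and <| (isOpen_lt continuous_const (hc _)).and <|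
    (isOpen_lt (hc _) continuous_const).and (isOpen_lt continuous_const (hc _))

theorem exists_ten_between {u v : I} (h : u < v) : ∃ t : Fin 10 → I, StrictMono t ∧
    ∀ i, t i ∈ Set.Ioo u v := by
  have : Infinite (Set.Ioo u v) := (Set.Ioo_infinite h).to_subtype
  obtain ⟨s, hs⟩ := Infinite.exists_subset_card_eq (Set.Ioo u v) 10
  exact ⟨fun i => (s.orderEmbOfFin hs i).1, fun i j hij => (s.orderEmbOfFin hs).strictMono hij,
    fun i => (s.orderEmbOfFin hs i).2⟩

/-- A small perturbation near a fixed point creates the sign pattern: compose with an automorphism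
that is supported in a small interval and moves the images of four points `x₁ < x₂ < x₃ < x₄` past
those points, in alternating directions. -/
theorem mem_closure_pattern {a b : I} (hab : a < b) {f : OPH}
    (hp : ∃ p, a ≤ p ∧ p ≤ b ∧ f.toIso p = p) : f ∈ closure {f : OPH | Pattern f.toIso a b} := by
  obtain ⟨p, hap, hpb, hfp⟩ := hp
  rw [OPH.toIso_apply] at hfp
  rw [Metric.mem_closure_iff]
  intro ε hε
  let K : Set I := Metric.ball p (ε / 4)
  have hpK : p ∈ K := Metric.mem_ball_self (by positivity)
  have hW : IsOpen (K ∩ f.1 ⁻¹' K) :=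
    Metric.isOpen_ball.inter (Metric.isOpen_ball.preimage f.1.continuous)
  have hne : ((K ∩ f.1 ⁻¹' K) ∩ Set.Ioo a b).Nonempty := by
    have hcl : p ∈ closure (Set.Ioo a b) := by rw [closure_Ioo hab.ne]; exact ⟨hap, hpb⟩
    exact mem_closure_iff.1 hcl _ hW ⟨hpK, by simpa [hfp] using hpK⟩
  obtain ⟨u, v, huv, hsub⟩ := (hW.inter isOpen_Ioo).exists_Ioo_subset hne
  obtain ⟨t, ht, htm⟩ := exists_ten_between huv
  have htK : ∀ i, t i ∈ K := fun i => (hsub (htm i)).1.1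
  have hfK : ∀ i, f.1 (t i) ∈ K := fun i => (hsub (htm i)).1.2
  have htab : ∀ i, t i ∈ Set.Ioo a b := fun i => (hsub (htm i)).2
  have hfmono : StrictMono f.1 := f.toIso.strictMono
  have hft : StrictMono fun i => f.1 (t i) := hfmono.comp ht
  -- the perturbation is supported in `[c, d]`, which lies within `ε / 4` of `p`
  set c : I := min (t 0) (f.1 (t 0)) with hc
  set d : I := max (t 9) (f.1 (t 9)) with hd
  have hcK : c ∈ K := by
    rcases min_choice (t 0) (f.1 (t 0)) with h | h <;> rw [hc, h] <;> simp [htK, hfK]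
  have hdK : d ∈ K := by
    rcases max_choice (t 9) (f.1 (t 9)) with h | h <;> rw [hd, h] <;> simp [htK, hfK]
  have hin : ∀ i : Fin 10, 0 < i → i < 9 → (c < t i ∧ t i < d) ∧ (c < f.1 (t i) ∧ f.1 (t i) < d) :=
    fun i h0 h9 => ⟨⟨(min_le_left _ _).trans_lt (ht h0), (ht h9).trans_le (le_max_left _ _)⟩,
      ⟨(min_le_right _ _).trans_lt (hft h0), (hft h9).trans_le (le_max_right _ _)⟩⟩
  obtain ⟨k, hk, hout⟩ := exists_push_list (d := d) 4
    [(f.1 (t 2), t 1), (f.1 (t 3), t 4), (f.1 (t 6), t 5), (f.1 (t 7), t 8)] c rfl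
    (by
      simp only [List.forall_mem_cons, List.not_mem_nil, false_implies, implies_true, and_true]
      refine ⟨?_, ?_, ?_, ?_⟩ <;>
        exact ⟨(hin _ (by decide) (by decide)).2.1, (hin _ (by decide) (by decide)).2.2,
          (hin _ (by decide) (by decide)).1.1, (hin _ (by decide) (by decide)).1.2⟩)
    (by
      have h1 : ∀ {i j : Fin 10}, i < j → t i < t j := fun h => ht h
      have h2 : ∀ {i j : Fin 10}, i < j → f.1 (t i) < f.1 (t j) := fun h => hft h
      simp only [List.pairwise_cons, List.forall_mem_cons, List.not_mem_nil, false_implies,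
        implies_true, and_true, List.Pairwise.nil]
      refine ⟨⟨⟨?_, ?_⟩, ⟨?_, ?_⟩, ?_, ?_⟩, ⟨⟨?_, ?_⟩, ?_, ?_⟩, ?_, ?_⟩ <;>
        first | exact h1 (by decide) | exact h2 (by decide))
  simp only [List.forall_mem_cons, List.not_mem_nil, false_implies, implies_true, and_true] at hk
  refine ⟨OPH.ofIso (f.toIso.trans k), ?_, ?_⟩
  · have e : ∀ x, (OPH.ofIso (f.toIso.trans k)).toIso x = k (f.1 x) := fun x => rfl
    refine ⟨t 2, t 3, t 6, t 7, (htab _).1, ht (by decide), ht (by decide), ht (by decide),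
      (htab _).2, ?_⟩
    rw [e, e, e, e, hk.1, hk.2.1, hk.2.2.1, hk.2.2.2]
    exact ⟨ht (by decide), ht (by decide), ht (by decide), ht (by decide)⟩
  · refine lt_of_le_of_lt (OPH.dist_le (C := ε / 2) (by positivity) fun x => ?_) (half_lt_self hε)
    change dist (f.1 x) (k (f.1 x)) ≤ ε / 2
    generalize f.1 x = w
    by_cases hw : w ≤ c ∨ d ≤ w
    · rw [hout w hw, dist_self]; positivity
    · push Not at hw
      have k1 : c < k w := by
        have := k.lt_iff_lt.2 hw.1
        rwa [hout c (Or.inl le_rfl)] at this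
      have k2 : k w < d := by
        have := k.lt_iff_lt.2 hw.2
        rwa [hout d (Or.inr le_rfl)] at this
      have hcd : |(c : ℝ) - d| < ε / 2 := by
        have := dist_triangle_right c d p
        have h1 : dist c p < ε / 4 := hcK
        have h2 : dist d p < ε / 4 := hdK
        rw [← Real.dist_eq, ← Subtype.dist_eq]; linarith
      rw [Subtype.dist_eq, Real.dist_eq]
      have a1 : (c : ℝ) < w := hw.1
      have a2 : (w : ℝ) < d := hw.2
      have a3 : (c : ℝ) < k w := k1
      have a4 : (k w : ℝ) < d := k2
      rw [abs_lt] at hcd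
      rw [abs_le]; constructor <;> linarith

/-- For each pair `a < b` in `Q` the required implication holds on the open dense set formed by the
pattern set and its exterior, since having a fixed point in `[a, b]` excludes the exterior. -/
theorem residual_generic {Q : Set I} (hQc : Q.Countable) :
    {f : OPH | Generic Q f.toIso} ∈ residual OPH := by
  have key : ∀ a b : I, a < b →
      {f : OPH | (∃ p, a ≤ p ∧ p ≤ b ∧ f.toIso p = p) → Pattern f.toIso a b} ∈ residual OPH := by
    intro a b hab
    -- an open set together with its exterior is open and dense
    set P : Set OPH := {f : OPH | Pattern f.toIso a b} with hP
    have hdense : Dense (P ∪ (closure P)ᶜ) := by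
      intro f
      by_cases hf : f ∈ closure P
      · exact closure_mono Set.subset_union_left hf
      · exact subset_closure (Or.inr hf)
    refine Filter.mem_of_superset (residual_of_dense_open
      ((isOpen_pattern a b).union isClosed_closure.isOpen_compl) hdense) ?_
    rintro f (hf | hf) hp
    · exact hf
    · exact absurd (mem_closure_pattern hab hp) hf
  have h := (countable_bInter_mem hQc).2 fun a _ => (countable_bInter_mem hQc).2 fun b _ =>
    (Filter.eventually_imp_distrib_left (f := residual OPH) (p := a < b)).2 (key a b)
  refine Filter.mem_of_superset h fun f hf a ha b hb hab => ?_
  exact Set.mem_iInter₂.1 (Set.mem_iInter₂.1 hf a ha) b hb hab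

/-- There is an element of `Homeo₊[0,1]` whose conjugacy class
`{g⁻¹ ∘ f ∘ g : g ∈ Homeo₊[0,1]}` is comeager in `Homeo₊[0,1]`. -/
theorem exists_comeager_conjugacy_class_OPH :
    ∃ f : OPH, {h : OPH | ∃ g : OPH, h.1 = g.1.trans (f.1.trans g.1.symm)} ∈ residual OPH := by
  obtain ⟨Q, hQc, hQ, h0, h1⟩ := exists_countable_dense_bot_top I
  have hres := residual_generic hQc
  -- no appeal to Baire category: if no element were generic, every set would be comeager
  rcases Set.eq_empty_or_nonempty {f : OPH | Generic Q f.toIso} with he | ⟨f, hf⟩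
  · rw [he] at hres
    exact ⟨OPH.id, Filter.mem_of_superset hres (Set.empty_subset _)⟩
  · refine ⟨f, Filter.mem_of_superset hres fun h hh => ?_⟩
    obtain ⟨Φ, hΦ⟩ := Generic.exists_conj hQc hQ (h0 0 fun x => x.2.1) (h1 1 fun x => x.2.2) hh hf
    refine ⟨OPH.ofIso Φ, Homeomorph.ext fun x => ?_⟩
    change h.toIso x = Φ.symm (f.toIso (Φ x))
    rw [← hΦ, Φ.symm_apply_apply]

end
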